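/- arXiv:1405.5606 — 2 statements merged into one kernel-verified Lean document; each statement's English description precedes it below -/
import Mathlib

section
/- For every k ∈ ℕ and every Δ ∈ {≤, =}, the family of languages generated by CD grammar systems with a single context-free component working in the (t∧Δk)-mode equals the family of finite languages: L(CD_1, CF[−λ], (t∧Δk)) = L(FIN), both with and without erasing rules. -/
namespace CDHybrid

/-- Symbols: nonterminals are natural numbers, terminals come from `T`. -/
abbrev Symb (T : Type) := ℕ ⊕ T

/-- Sentential forms. -/
abbrev SForm (T : Type) := List (Symb T)

/-- A context-free rule `A → z`. -/
abbrev Rule (T : Type) := ℕ × SForm T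

/-- Number of nonterminal occurrences in a sentential form. -/
def ntCount {T : Type} (x : SForm T) : ℕ := (x.filter Sum.isLeft).length

/-- One rewriting step using some rule of the rule set `P`. -/
def RStep {T : Type} (P : List (Rule T)) (x y : SForm T) : Prop :=
  ∃ r ∈ P, ∃ u v : SForm T, x = u ++ Sum.inl r.1 :: v ∧ y = u ++ r.2 ++ v

/-- `m`-step derivation using only rules of `P`. -/
def StepsN {T : Type} (P : List (Rule T)) : ℕ → SForm T → SForm T → Prop
  | 0, x, y => x = y
  | m + 1, x, y => ∃ z, RStep P x z ∧ StepsN P m z y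

/-- `m`-step derivation using only rules of `P`, all intermediate (and the final)
sentential forms having at most `b` occurrences of nonterminals. -/
def StepsNB {T : Type} (P : List (Rule T)) (b : ℕ) : ℕ → SForm T → SForm T → Prop
  | 0, x, y => x = y
  | m + 1, x, y => ∃ z, RStep P x z ∧ ntCount z ≤ b ∧ StepsNB P b m z y

/-- Derivation modes of CD grammar systems. -/
inductive Mode where
  | eq : ℕ → Mode
  | le : ℕ → Mode
  | ge : ℕ → Mode
  | star : Mode
  | t : Mode
  | conj : Mode → Mode → Mode

/-- The predicate of a derivation mode: `modeOK P f m y` holds if an `m`-step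
derivation by the component `P` ending in `y` is acceptable for mode `f`. -/
def modeOK {T : Type} (P : List (Rule T)) : Mode → ℕ → SForm T → Prop
  | .eq k, m, _ => m = k
  | .le k, m, _ => m ≤ k
  | .ge k, m, _ => k ≤ m
  | .star, _, _ => True
  | .t, _, y => ¬ ∃ z, RStep P y z
  | .conj f g, m, y => modeOK P f m y ∧ modeOK P g m y

/-- A CD grammar system with context-free components. -/
structure CDGS (T : Type) where
  deg : ℕ
  start : ℕ
  comp : Fin deg → List (Rule T)

/-- λ-freeness: no erasing rules. -/
def CDGS.LamFree {T : Type} (G : CDGS T) : Prop :=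
  ∀ i : Fin G.deg, ∀ r ∈ G.comp i, r.2 ≠ []

/-- One derivation step of a component of `G` in mode `f`. -/
def CDGS.ModeStep {T : Type} (G : CDGS T) (f : Mode) (x y : SForm T) : Prop :=
  ∃ i : Fin G.deg, ∃ m : ℕ, StepsN (G.comp i) m x y ∧ modeOK (G.comp i) f m y

/-- One derivation step of a component of `G` in mode `f`, with all produced
sentential forms having at most `b` nonterminal occurrences. -/
def CDGS.ModeStepB {T : Type} (G : CDGS T) (f : Mode) (b : ℕ) (x y : SForm T) : Prop :=
  ∃ i : Fin G.deg, ∃ m : ℕ, StepsNB (G.comp i) b m x y ∧ modeOK (G.comp i) f m y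

/-- The language generated by `G` in mode `f`. -/
def CDGS.lang {T : Type} (G : CDGS T) (f : Mode) : Set (List T) :=
  { w | Relation.TransGen (G.ModeStep f) [Sum.inl G.start] (w.map Sum.inr) }

/-- The words of the language of `G` in mode `f` possessing a derivation of index
at most `b`, i.e., all sentential forms occurring in it have at most `b`
nonterminal occurrences. -/
def CDGS.langB {T : Type} (G : CDGS T) (f : Mode) (b : ℕ) : Set (List T) :=
  { w | ntCount ([Sum.inl G.start] : SForm T) ≤ b ∧
      Relation.TransGen (G.ModeStepB f b) [Sum.inl G.start] (w.map Sum.inr) }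

/-- Two languages are considered equal iff they differ at most in the empty word. -/
def EqL {T : Type} (L₁ L₂ : Set (List T)) : Prop := L₁ \ {[]} = L₂ \ {[]}

/-- The family `L(CD_n, CF[−λ], f)`; `lf = true` forbids erasing rules. -/
def CDFam (T : Type) (lf : Bool) (n : ℕ) (f : Mode) : Set (Set (List T)) :=
  { L | ∃ G : CDGS T, G.deg ≤ n ∧ (lf = true → G.LamFree) ∧ EqL (G.lang f) L }

/-- The family `L(CD_∞, CF[−λ], f)`. -/
def CDFamInf (T : Type) (lf : Bool) (f : Mode) : Set (Set (List T)) :=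
  { L | ∃ G : CDGS T, (lf = true → G.LamFree) ∧ EqL (G.lang f) L }

/-- The family `L_m(CD_n, CF[−λ], f)` of such languages of index at most `m`. -/
def CDFamInd (T : Type) (lf : Bool) (n : ℕ) (f : Mode) (m : ℕ) : Set (Set (List T)) :=
  { L | ∃ G : CDGS T, G.deg ≤ n ∧ (lf = true → G.LamFree) ∧ EqL (G.lang f) L ∧
      G.lang f ⊆ G.langB f m }

/-- The family `L_m(CD_∞, CF[−λ], f)`. -/
def CDFamIndInf (T : Type) (lf : Bool) (f : Mode) (m : ℕ) : Set (Set (List T)) :=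
  { L | ∃ G : CDGS T, (lf = true → G.LamFree) ∧ EqL (G.lang f) L ∧ G.lang f ⊆ G.langB f m }

/-- The family `L_fin(CD_∞, CF[−λ], f)`. -/
def CDFamFinInf (T : Type) (lf : Bool) (f : Mode) : Set (Set (List T)) :=
  { L | ∃ m : ℕ, 1 ≤ m ∧ L ∈ CDFamIndInf T lf f m }

/-- A context-free grammar. -/
structure CFG (T : Type) where
  start : ℕ
  rules : List (Rule T)

/-- The language generated by a context-free grammar. -/
def CFG.lang {T : Type} (G : CFG T) : Set (List T) :=
  { w | Relation.ReflTransGen (RStep G.rules) [Sum.inl G.start] (w.map Sum.inr) }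

/-- The words of `G.lang` having a derivation of index at most `m`. -/
def CFG.langB {T : Type} (G : CFG T) (m : ℕ) : Set (List T) :=
  { w | ntCount ([Sum.inl G.start] : SForm T) ≤ m ∧
      Relation.ReflTransGen (fun x y => RStep G.rules x y ∧ ntCount y ≤ m)
        [Sum.inl G.start] (w.map Sum.inr) }

/-- The family `L(CF)` of context-free languages. -/
def CFFam (T : Type) : Set (Set (List T)) := { L | ∃ G : CFG T, EqL G.lang L }

/-- The family `L_m(CF)` of context-free languages of index at most `m`. -/
def CFFamInd (T : Type) (m : ℕ) : Set (Set (List T)) :=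
  { L | ∃ G : CFG T, EqL G.lang L ∧ G.lang ⊆ G.langB m }

/-- The family `L_fin(CF)` of context-free languages of finite index. -/
def CFFamFin (T : Type) : Set (Set (List T)) :=
  { L | ∃ m : ℕ, 1 ≤ m ∧ L ∈ CFFamInd T m }

/-- A grammar is linear if every right-hand side contains at most one nonterminal. -/
def CFG.Linear {T : Type} (G : CFG T) : Prop := ∀ r ∈ G.rules, ntCount r.2 ≤ 1

/-- The family `L(LIN)` of linear context-free languages. -/
def LinFam (T : Type) : Set (Set (List T)) :=
  { L | ∃ G : CFG T, G.Linear ∧ EqL G.lang L }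

/-- The family `L(FIN)` of finite languages. -/
def FinFam (T : Type) : Set (Set (List T)) := { L | L.Finite }

/-- A programmed grammar with context-free rules. -/
structure PG (T : Type) where
  start : ℕ
  nLab : ℕ
  rule : Fin nLab → Rule T
  succ : Fin nLab → Set (Fin nLab)
  fail : Fin nLab → Set (Fin nLab)

def PG.LamFree {T : Type} (G : PG T) : Prop := ∀ r : Fin G.nLab, (G.rule r).2 ≠ []

/-- No appearance checking: all failure fields are empty. -/
def PG.NoAC {T : Type} (G : PG T) : Prop := ∀ r : Fin G.nLab, G.fail r = ∅

/-- One step of a programmed grammar on pairs (sentential form, label). -/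
def PG.PStep {T : Type} (G : PG T) (p q : SForm T × Fin G.nLab) : Prop :=
  (∃ u v : SForm T, p.1 = u ++ Sum.inl (G.rule p.2).1 :: v ∧
      q.1 = u ++ (G.rule p.2).2 ++ v ∧ q.2 ∈ G.succ p.2) ∨
  (Sum.inl (G.rule p.2).1 ∉ p.1 ∧ q.1 = p.1 ∧ q.2 ∈ G.fail p.2)

/-- The language generated by a programmed grammar. -/
def PG.lang {T : Type} (G : PG T) : Set (List T) :=
  { w | ∃ r₁ r₂ : Fin G.nLab,
      Relation.ReflTransGen G.PStep ([Sum.inl G.start], r₁) (w.map Sum.inr, r₂) }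

/-- The words of `G.lang` having a derivation of index at most `m`. -/
def PG.langB {T : Type} (G : PG T) (m : ℕ) : Set (List T) :=
  { w | ∃ r₁ r₂ : Fin G.nLab, ntCount ([Sum.inl G.start] : SForm T) ≤ m ∧
      Relation.ReflTransGen (fun p q => G.PStep p q ∧ ntCount q.1 ≤ m)
        ([Sum.inl G.start], r₁) (w.map Sum.inr, r₂) }

/-- The family `L_m(P, CF[−λ][, ac])`: programmed languages of index at most `m`;
`ac = false` forbids appearance checking, `lf = true` forbids erasing rules. -/
def PFamInd (T : Type) (lf ac : Bool) (m : ℕ) : Set (Set (List T)) :=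
  { L | ∃ G : PG T, (lf = true → G.LamFree) ∧ (ac = false → G.NoAC) ∧
      EqL G.lang L ∧ G.lang ⊆ G.langB m }

/-- The family `L_fin(P, CF[−λ][, ac])` of programmed languages of finite index. -/
def PFamFin (T : Type) (lf ac : Bool) : Set (Set (List T)) :=
  { L | ∃ m : ℕ, 1 ≤ m ∧ L ∈ PFamInd T lf ac m }


theorem finite_rstep {T : Type} (P : List (Rule T)) (x : SForm T) : {y | RStep P x y}.Finite := by
  have hS : (⋃ r ∈ {r | r ∈ P}, (fun n : ℕ => x.take n ++ r.2 ++ x.drop (n+1)) ''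
      (Set.Iic x.length)).Finite := by
    apply Set.Finite.biUnion (List.finite_toSet P)
    intro r _
    exact (Set.finite_Iic _).image _
  refine hS.subset ?_
  rintro y ⟨r, hr, u, v, rfl, rfl⟩
  simp only [Set.mem_iUnion]
  refine ⟨r, hr, u.length, ?_, ?_⟩
  · simp
  · simp

theorem finite_stepsN {T : Type} (P : List (Rule T)) (m : ℕ) :
    ∀ x : SForm T, {y | StepsN P m x y}.Finite := by
  induction m with
  | zero =>
    intro x
    exact (Set.finite_singleton x).subset (fun y hy => by
      simp only [StepsN, Set.mem_setOf_eq] at hy; simp [hy])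
  | succ m ih =>
    intro x
    have : (⋃ z ∈ {z | RStep P x z}, {y | StepsN P m z y}).Finite :=
      (finite_rstep P x).biUnion (fun z _ => ih z)
    refine this.subset ?_
    rintro y ⟨z, h1, h2⟩
    simp only [Set.mem_iUnion]
    exact ⟨z, h1, h2⟩

theorem modeOK_le {k : ℕ} {d : ℕ → Mode} (hd : d = Mode.le ∨ d = Mode.eq)
    {P : List (Rule ℕ)} {m : ℕ} {y : SForm ℕ}
    (h : modeOK P (Mode.conj Mode.t (d k)) m y) : m ≤ k ∧ ¬ ∃ z, RStep P y z := by
  rcases hd with rfl | rfl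
  · exact ⟨h.2, h.1⟩
  · exact ⟨le_of_eq h.2, h.1⟩

theorem lang_finite {k : ℕ} {d : ℕ → Mode} (hd : d = Mode.le ∨ d = Mode.eq)
    (G : CDGS ℕ) (hG : G.deg ≤ 1) : (G.lang (Mode.conj Mode.t (d k))).Finite := by
  have key : ∀ x y, Relation.TransGen (G.ModeStep (Mode.conj Mode.t (d k))) x y →
      ∃ i : Fin G.deg, ∃ m ≤ k, StepsN (G.comp i) m x y ∧ ¬ ∃ z, RStep (G.comp i) y z := by
    intro x y h
    induction h with
    | single h =>
      obtain ⟨i, m, h1, h2⟩ := h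
      exact ⟨i, m, (modeOK_le hd h2).1, h1, (modeOK_le hd h2).2⟩
    | tail _ h ih =>
      obtain ⟨j, m', h1, _⟩ := h
      obtain ⟨i, m, hm, h3, h4⟩ := ih
      have hij : j = i := Fin.ext (by omega)
      subst hij
      cases m' with
      | zero =>
        cases h1
        exact ⟨j, m, hm, h3, h4⟩
      | succ m' =>
        obtain ⟨z, hz, _⟩ := h1
        exact absurd ⟨z, hz⟩ h4
  have hfin : (⋃ i : Fin G.deg, ⋃ m ∈ Set.Iic k,
      {y | StepsN (G.comp i) m [Sum.inl G.start] y}).Finite :=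
    Set.finite_iUnion (fun i => (Set.finite_Iic k).biUnion (fun m _ => finite_stepsN _ m _))
  have hinj : Function.Injective (List.map (Sum.inr : ℕ → Symb ℕ)) :=
    List.map_injective_iff.mpr Sum.inr_injective
  refine (hfin.preimage (hinj.injOn)).subset ?_
  intro w hw
  obtain ⟨i, m, hm, h, _⟩ := key _ _ hw
  simp only [Set.mem_preimage, Set.mem_iUnion]
  exact ⟨i, m, hm, h⟩

/-- Rules of the chain grammar generating the listed words in exactly `k+1` steps. -/
def chainRules (k : ℕ) (W : List (List ℕ)) : List (Rule ℕ) :=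
  (List.range k).map (fun i => (i, [Sum.inl (i+1)])) ++ W.map (fun w => (k, w.map Sum.inr))

theorem mem_chain {k : ℕ} {W : List (List ℕ)} {r : Rule ℕ} : r ∈ chainRules k W ↔
    (∃ i < k, r = (i, [Sum.inl (i+1)])) ∨ ∃ w ∈ W, r = (k, w.map Sum.inr) := by
  simp [chainRules, eq_comm]

theorem no_step (P : List (Rule ℕ)) (w : List ℕ) : ¬ ∃ z, RStep P (w.map Sum.inr) z := by
  rintro ⟨z, r, _, u, v, h, _⟩
  have : (Sum.inl r.1 : Symb ℕ) ∈ w.map Sum.inr := by rw [h]; simp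
  simp at this

theorem chain_derive {k : ℕ} {W : List (List ℕ)} {w : List ℕ} (hw : w ∈ W) :
    ∀ j ≤ k, StepsN (chainRules k W) (j+1) [Sum.inl (k - j)] (w.map Sum.inr) := by
  intro j
  induction j with
  | zero =>
    intro _
    exact ⟨w.map Sum.inr, ⟨(k, w.map Sum.inr), mem_chain.2 (Or.inr ⟨w, hw, rfl⟩), [], [],
      by simp, by simp⟩, rfl⟩
  | succ j ih =>
    intro hj
    refine ⟨[Sum.inl (k - j)], ⟨(k-(j+1), [Sum.inl (k-(j+1)+1)]),
      mem_chain.2 (Or.inl ⟨_, by omega, rfl⟩), [], [], by simp, ?_⟩, ih (by omega)⟩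
    have : k - (j+1) + 1 = k - j := by omega
    simp [this]

def ChainInv (W : List (List ℕ)) (x : SForm ℕ) : Prop :=
  (∃ i, x = [Sum.inl i]) ∨ ∃ w ∈ W, x = w.map Sum.inr

theorem chainInv_step {k : ℕ} {W : List (List ℕ)} {x y : SForm ℕ} (hx : ChainInv W x)
    (h : RStep (chainRules k W) x y) : ChainInv W y := by
  rcases hx with ⟨i, rfl⟩ | ⟨w, _, rfl⟩
  · obtain ⟨r, hr, u, v, h1, rfl⟩ := h
    have hl := congrArg List.length h1
    simp only [List.length_append, List.length_cons, List.length_nil] at hl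
    have hu : u = [] := List.length_eq_zero_iff.1 (by omega)
    have hv : v = [] := List.length_eq_zero_iff.1 (by omega)
    subst hu hv
    rcases mem_chain.1 hr with ⟨i, _, rfl⟩ | ⟨w, hw, rfl⟩
    · exact Or.inl ⟨i+1, by simp⟩
    · exact Or.inr ⟨w, hw, by simp⟩
  · exact absurd ⟨y, h⟩ (no_step _ w)

theorem chainInv_steps {k : ℕ} {W : List (List ℕ)} (m : ℕ) : ∀ {x y : SForm ℕ},
    ChainInv W x → StepsN (chainRules k W) m x y → ChainInv W y := by
  induction m with
  | zero => intro x y hx h; cases h; exact hx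
  | succ m ih =>
    rintro x y hx ⟨z, h1, h2⟩
    exact ih (chainInv_step hx h1) h2

/-- For every k ∈ ℕ (positive, per the paper's convention) and every
Δ ∈ {≤, =}, L(CD_1, CF[−λ], (t∧Δk)) = L(FIN), both with and without erasing rules. -/
theorem stmt0 (lf : Bool) (k : ℕ) (hk : 1 ≤ k) (d : ℕ → Mode)
    (hd : d = Mode.le ∨ d = Mode.eq) :
    CDFam ℕ lf 1 (Mode.conj Mode.t (d k)) = FinFam ℕ := by
  ext L
  constructor
  · rintro ⟨G, hG, _, hE⟩
    have h1 : (L \ {[]}).Finite := by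
      rw [← show _ = L \ {[]} from hE]
      exact (lang_finite hd G hG).sdiff
    exact (h1.union (Set.finite_singleton [])).subset (by simp)
  · intro hL
    have hL' : (L \ {[]}).Finite := Set.Finite.sdiff (show L.Finite from hL)
    obtain ⟨k, rfl⟩ : ∃ n, k = n + 1 := ⟨k - 1, by omega⟩
    set W := hL'.toFinset.toList with hW
    have hmem : ∀ w, w ∈ W ↔ w ∈ L ∧ w ≠ [] := by intro w; simp [hW]
    refine ⟨⟨1, 0, fun _ => chainRules k W⟩, le_refl _, ?_, ?_⟩
    · intro _ i r hr
      rcases mem_chain.1 hr with ⟨i, _, rfl⟩ | ⟨w, hw, rfl⟩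
      · simp
      · simpa using ((hmem w).1 hw).2
    · have hlang : ∀ w, w ∈ CDGS.lang ⟨1, 0, fun _ => chainRules k W⟩
          (Mode.conj Mode.t (d (k+1))) ↔ w ∈ W := by
        intro w
        constructor
        · intro h
          have key : ChainInv W (w.map Sum.inr) := by
            have h' : Relation.TransGen _ _ _ := h
            generalize (w.map Sum.inr : SForm ℕ) = y at h'
            induction h' with
            | single h =>
              obtain ⟨_, m, h1, _⟩ := h
              exact chainInv_steps m (Or.inl ⟨0, rfl⟩) h1
            | tail _ h ih =>
              obtain ⟨_, m, h1, _⟩ := h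
              exact chainInv_steps m ih h1
          rcases key with ⟨i, hi⟩ | ⟨w', hw', he⟩
          · have : (Sum.inl i : Symb ℕ) ∈ w.map Sum.inr := by rw [hi]; simp
            simp at this
          · have := List.map_injective_iff.mpr Sum.inr_injective he
            rwa [this]
        · intro hw
          refine Relation.TransGen.single ⟨0, k+1, ?_, no_step _ w, ?_⟩
          · simpa using chain_derive hw k le_rfl
          · rcases hd with rfl | rfl
            · exact le_refl (k+1)
            · exact rfl
      unfold EqL
      ext w
      simp only [Set.mem_diff, Set.mem_singleton_iff, hlang, hmem]
      tauto

end CDHybrid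
end

section
/- For every Δ ∈ {≤, =}, the family of linear context-free languages L(LIN) coincides with the family L_1(CF) of context-free languages of index 1 and with the family L(CD_2, CF[−λ], (t∧Δ1)) of languages generated by CD grammar systems with at most two context-free components working in the (t∧Δ1)-mode, both with and without erasing rules. -/
namespace CDHybrid

open Relation

/-- terminal word as a sentential form -/
abbrev tm (w : List ℕ) : SForm ℕ := w.map Sum.inr

inductive Gen (P : List (Rule ℕ)) : ℕ → List ℕ → Prop
  | term (A : ℕ) (w : List ℕ) : (A, tm w) ∈ P → Gen P A w
  | step (A B : ℕ) (u v w : List ℕ) :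
      (A, tm u ++ Sum.inl B :: tm v) ∈ P → Gen P B w → Gen P A (u ++ w ++ v)

theorem tm_append (u v : List ℕ) : tm (u ++ v) = tm u ++ tm v := by simp [tm]

theorem tm_inj {u v : List ℕ} (h : tm u = tm v) : u = v :=
  List.map_injective_iff.mpr Sum.inr_injective h

theorem not_mem_tm (A : ℕ) (w : List ℕ) : (Sum.inl A : Symb ℕ) ∉ tm w := by simp [tm]

theorem nt_append (x y : SForm ℕ) : ntCount (x ++ y) = ntCount x + ntCount y := by
  simp [ntCount]

theorem nt_inl (A : ℕ) (y : SForm ℕ) : ntCount (Sum.inl A :: y) = 1 + ntCount y := by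
  rw [Nat.add_comm]; rfl

theorem nt_inr (A : ℕ) (y : SForm ℕ) : ntCount (Sum.inr A :: y) = ntCount y := by
  simp [ntCount]

theorem nt_tm (w : List ℕ) : ntCount (tm w) = 0 := by
  simp [ntCount, tm]

theorem nt_zero (z : SForm ℕ) (h : ntCount z = 0) : ∃ t, z = tm t := by
  induction z with
  | nil => exact ⟨[], rfl⟩
  | cons a z ih =>
    rcases a with a | a
    · rw [nt_inl] at h; omega
    · rw [nt_inr] at h
      obtain ⟨t, rfl⟩ := ih h
      exact ⟨a :: t, rfl⟩

theorem nt_pos (z : SForm ℕ) (h : ntCount z ≠ 0) : ∃ a B b, z = a ++ Sum.inl B :: b := by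
  induction z with
  | nil => exact absurd rfl h
  | cons a z ih =>
    rcases a with a | a
    · exact ⟨[], a, z, rfl⟩
    · rw [nt_inr] at h
      obtain ⟨x, B, b, rfl⟩ := ih h
      exact ⟨Sum.inr a :: x, B, b, rfl⟩

theorem decomp (z : SForm ℕ) (h : ntCount z ≤ 1) :
    (∃ t, z = tm t) ∨ ∃ a B b, z = tm a ++ Sum.inl B :: tm b := by
  by_cases h0 : ntCount z = 0
  · exact Or.inl (nt_zero z h0)
  · obtain ⟨a, B, b, rfl⟩ := nt_pos z h0
    rw [nt_append, nt_inl] at h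
    obtain ⟨s, rfl⟩ := nt_zero a (by omega)
    obtain ⟨t, rfl⟩ := nt_zero b (by omega)
    exact Or.inr ⟨s, B, t, rfl⟩

theorem uniq (u v : List ℕ) (A A' : ℕ) (u' v' : SForm ℕ)
    (h : tm u ++ Sum.inl A :: tm v = u' ++ Sum.inl A' :: v') :
    u' = tm u ∧ A' = A ∧ v' = tm v := by
  have h1 := congrArg ntCount h
  simp only [nt_append, nt_inl, nt_tm] at h1
  obtain ⟨s, rfl⟩ := nt_zero u' (by omega)
  obtain ⟨t, rfl⟩ := nt_zero v' (by omega)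
  clear h1
  induction u generalizing s with
  | nil =>
    cases s with
    | nil => simp [tm] at h ⊢; exact ⟨h.1.symm, h.2.symm⟩
    | cons a s => simp [tm] at h
  | cons b u ih =>
    cases s with
    | nil => simp [tm] at h
    | cons a s =>
      simp only [tm, List.map_cons, List.cons_append, List.cons.injEq] at h
      obtain ⟨h1, h2⟩ := h
      obtain ⟨h3, h4, h5⟩ := ih s h2
      refine ⟨?_, h4, h5⟩
      simp only [tm, List.map_cons]
      rw [h1]
      exact congrArg _ h3

theorem no_step_tm (P : List (Rule ℕ)) (w : List ℕ) (y : SForm ℕ) : ¬ RStep P (tm w) y := by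
  rintro ⟨r, _, u, v, h, _⟩
  apply not_mem_tm r.1 w
  rw [h]; simp

/-- bounded step -/
def BStep (P : List (Rule ℕ)) (x y : SForm ℕ) : Prop := RStep P x y ∧ ntCount y ≤ 1

theorem gen_of_rtg (P : List (Rule ℕ)) (x : SForm ℕ) (w : List ℕ)
    (h : ReflTransGen (BStep P) x (tm w)) :
    ∀ u A v, x = tm u ++ Sum.inl A :: tm v → ∃ m, w = u ++ m ++ v ∧ Gen P A m := by
  induction h using ReflTransGen.head_induction_on with
  | refl =>
    intro u A v h
    exact absurd (by rw [h]; simp) (not_mem_tm A w)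
  | head hxy hyw ih =>
    intro u A v hx
    obtain ⟨⟨r, hr, u', v', h1, h2⟩, hc⟩ := hxy
    rw [hx] at h1
    obtain ⟨rfl, h3, rfl⟩ := uniq _ _ _ _ _ _ h1
    rw [h2, nt_append, nt_append] at hc
    obtain ⟨A0, z⟩ := r
    simp only at *
    subst h3
    rcases decomp z (by omega) with ⟨t, rfl⟩ | ⟨a, B, b, rfl⟩
    · refine ⟨t, ?_, Gen.term _ _ hr⟩
      rw [← tm_append, ← tm_append] at h2
      subst h2
      rcases ReflTransGen.cases_head hyw with h | ⟨c, hc, _⟩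
      · exact (tm_inj h).symm
      · exact absurd hc.1 (no_step_tm _ _ _)
    · obtain ⟨m, hm, hg⟩ := ih (u ++ a) B (b ++ v) (by rw [h2]; simp [tm])
      exact ⟨a ++ m ++ b, by rw [hm]; simp, Gen.step _ _ _ _ _ hr hg⟩

theorem rtg_of_gen (P : List (Rule ℕ)) (A : ℕ) (w : List ℕ) (h : Gen P A w) :
    ∀ u v, ReflTransGen (BStep P) (tm u ++ Sum.inl A :: tm v) (tm (u ++ w ++ v)) := by
  induction h with
  | term A w h =>
    intro u v
    refine ReflTransGen.single ⟨⟨_, h, tm u, tm v, rfl, by simp [tm]⟩, by rw [nt_tm]; omega⟩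
  | step A B a b w h _ ih =>
    intro u v
    refine ReflTransGen.head (b := tm (u ++ a) ++ Sum.inl B :: tm (b ++ v)) ⟨⟨_, h, tm u, tm v, rfl, by simp [tm]⟩, ?_⟩ ?_
    · rw [nt_append, nt_inl, nt_tm, nt_tm]
    · have := ih (u ++ a) (b ++ v)
      simpa using this

theorem gen_iff (P : List (Rule ℕ)) (A : ℕ) (w : List ℕ) :
    ReflTransGen (BStep P) [Sum.inl A] (tm w) ↔ Gen P A w := by
  constructor
  · intro h
    obtain ⟨m, h1, h2⟩ := gen_of_rtg P _ w h [] A [] rfl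
    simp at h1
    exact h1 ▸ h2
  · intro h
    simpa using rtg_of_gen P A w h [] []

theorem gen_mono (P Q : List (Rule ℕ)) (h : ∀ r ∈ P, ntCount r.2 ≤ 1 → r ∈ Q) (A w)
    (hg : Gen P A w) : Gen Q A w := by
  induction hg with
  | term A w h' => exact Gen.term _ _ (h _ h' (by simp only [nt_tm]; omega))
  | step A B a b w h' _ ih =>
    exact Gen.step _ _ _ _ _ (h _ h' (by simp only [nt_append, nt_inl, nt_tm]; omega)) ih

def GenFam : Set (Set (List ℕ)) := { L | ∃ S P, EqL {w | Gen P S w} L }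

theorem langB_eq (G : CFG ℕ) : G.langB 1 = {w | Gen G.rules G.start w} := by
  ext w
  simp only [CFG.langB, Set.mem_ofPred_eq]
  rw [← gen_iff]
  constructor
  · exact fun h => h.2
  · exact fun h => ⟨le_refl 1, h⟩

theorem langB_sub (G : CFG ℕ) : G.langB 1 ⊆ G.lang := by
  intro w h
  exact ReflTransGen.mono (fun _ _ h => h.1) _ _ h.2

theorem lin_bstep (P : List (Rule ℕ)) (hl : ∀ r ∈ P, ntCount r.2 ≤ 1) (x y : SForm ℕ)
    (hx : ntCount x ≤ 1) (h : ReflTransGen (RStep P) x y) :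
    ReflTransGen (BStep P) x y ∧ ntCount y ≤ 1 := by
  induction h with
  | refl => exact ⟨.refl, hx⟩
  | tail _ h2 ih =>
    obtain ⟨i1, i2⟩ := ih
    have h3 := h2
    obtain ⟨r, hr, u, v, rfl, rfl⟩ := h2
    have := hl r hr
    simp only [nt_append, nt_inl] at i2 
    have hc : ntCount (u ++ r.2 ++ v) ≤ 1 := by simp only [nt_append]; omega
    exact ⟨i1.tail ⟨h3, hc⟩, hc⟩

theorem lin_lang (G : CFG ℕ) (hl : G.Linear) : G.lang = G.langB 1 := by
  apply Set.Subset.antisymm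
  · intro w h
    exact ⟨le_refl 1, (lin_bstep _ hl _ _ (le_refl 1) h).1⟩
  · exact langB_sub G

theorem gen_to_lin (S : ℕ) (P : List (Rule ℕ)) :
    ∃ G : CFG ℕ, G.Linear ∧ G.lang = {w | Gen P S w} := by
  refine ⟨⟨S, P.filter (fun r => ntCount r.2 ≤ 1)⟩, ?_, ?_⟩
  · intro r hr
    simpa using (List.mem_filter.1 hr).2
  · rw [lin_lang, langB_eq]
    · ext w
      refine ⟨fun h => gen_mono _ _ ?_ _ _ h, fun h => gen_mono _ _ ?_ _ _ h⟩
      · intro r hr _; exact (List.mem_filter.1 hr).1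
      · intro r hr h; exact List.mem_filter.2 ⟨hr, by simpa using h⟩
    · intro r hr
      simpa using (List.mem_filter.1 hr).2

theorem lin_fam : LinFam ℕ = GenFam := by
  ext L
  constructor
  · rintro ⟨G, hl, h⟩
    rw [lin_lang G hl, langB_eq] at h
    exact ⟨_, _, h⟩
  · rintro ⟨S, P, h⟩
    obtain ⟨G, hl, h'⟩ := gen_to_lin S P
    exact ⟨G, hl, h' ▸ h⟩

theorem ind_fam : CFFamInd ℕ 1 = GenFam := by
  ext L
  constructor
  · rintro ⟨G, h, hl⟩
    rw [Set.Subset.antisymm hl (langB_sub G), langB_eq] at h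
    exact ⟨_, _, h⟩
  · rintro ⟨S, P, h⟩
    obtain ⟨G, hl, h'⟩ := gen_to_lin S P
    exact ⟨G, h' ▸ h, (lin_lang G hl).subset⟩

/-! CD systems -/

def Dom (P : List (Rule ℕ)) (A : ℕ) : Prop := ∃ r ∈ P, r.1 = A

def Blocked (P : List (Rule ℕ)) (y : SForm ℕ) : Prop := ∀ B, Sum.inl B ∈ y → ¬ Dom P B

theorem blocked_iff (P : List (Rule ℕ)) (y : SForm ℕ) : (¬ ∃ z, RStep P y z) ↔ Blocked P y := by
  constructor
  · rintro h B hB ⟨r, hr, rfl⟩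
    obtain ⟨u, v, rfl⟩ := List.append_of_mem hB
    exact h ⟨_, r, hr, u, v, rfl, rfl⟩
  · rintro h ⟨z, r, hr, u, v, rfl, rfl⟩
    exact h r.1 (by simp) ⟨r, hr, rfl⟩

def M (G : CDGS ℕ) (x y : SForm ℕ) : Prop :=
  ∃ i, RStep (G.comp i) x y ∧ Blocked (G.comp i) y

theorem mode_iff (G : CDGS ℕ) (d : ℕ → Mode) (hd : d = Mode.le ∨ d = Mode.eq) (w : List ℕ) :
    w ∈ G.lang (Mode.conj Mode.t (d 1)) ↔ ReflTransGen (M G) [Sum.inl G.start] (tm w) := by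
  have h1 : ∀ x y, M G x y → G.ModeStep (Mode.conj Mode.t (d 1)) x y := by
    rintro x y ⟨i, h, hb⟩
    refine ⟨i, 1, ⟨y, h, rfl⟩, ?_⟩
    rcases hd with rfl | rfl <;> exact ⟨(blocked_iff _ _).2 hb, by simp [modeOK]⟩
  have h2 : ∀ x y, G.ModeStep (Mode.conj Mode.t (d 1)) x y → ReflTransGen (M G) x y := by
    rintro x y ⟨i, m, h, hb, hm⟩
    have hm' : m ≤ 1 := by
      rcases hd with rfl | rfl
      · exact hm
      · exact le_of_eq hm
    rcases m with _ | m
    · cases h; exact .refl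
    · obtain rfl : m = 0 := by omega
      obtain ⟨z, hz, rfl⟩ := h
      exact .single ⟨i, hz, (blocked_iff _ _).1 hb⟩
  constructor
  · intro h
    change TransGen _ _ _ at h
    generalize ([Sum.inl G.start] : SForm ℕ) = a at h
    change TransGen _ _ (tm w) at h
    generalize tm w = b at h
    induction h with
    | single h => exact h2 _ _ h
    | tail _ h ih => exact ih.trans (h2 _ _ h)
  · intro h
    rcases reflTransGen_iff_eq_or_transGen.1 h with h | h
    · exact absurd (by rw [h]; simp) (not_mem_tm G.start w)
    · exact TransGen.mono h1 _ _ h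

open Classical in
noncomputable def PL (G : CDGS ℕ) : List (Rule ℕ) :=
  (List.finRange G.deg).flatMap fun i =>
    (G.comp i).filter (fun r => Blocked (G.comp i) r.2)

theorem mem_PL (G : CDGS ℕ) (r : Rule ℕ) :
    r ∈ PL G ↔ ∃ i, r ∈ G.comp i ∧ Blocked (G.comp i) r.2 := by
  simp [PL]

theorem dead (G : CDGS ℕ) (B : ℕ) (hB : ∀ i, ¬ Dom (G.comp i) B) (x : SForm ℕ) (w : List ℕ)
    (h : ReflTransGen (M G) x (tm w)) : Sum.inl B ∉ x := by
  induction h using ReflTransGen.head_induction_on with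
  | refl => exact not_mem_tm _ _
  | head h _ ih =>
    obtain ⟨i, ⟨r, hr, u, v, rfl, rfl⟩, _⟩ := h
    intro hm
    apply ih
    have : B ≠ r.1 := fun e => hB i ⟨r, hr, e.symm⟩
    simp [this] at hm ⊢
    tauto

theorem count_le (G : CDGS ℕ) (hG : G.deg ≤ 2) (i : Fin G.deg) (y : SForm ℕ) (w : List ℕ)
    (hb : Blocked (G.comp i) y) (h : ReflTransGen (M G) y (tm w)) : ntCount y ≤ 1 := by
  rcases ReflTransGen.cases_head h with rfl | ⟨z, ⟨j, ⟨r, hr, u, v, rfl, rfl⟩, hbz⟩, hz⟩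
  · rw [nt_tm]; omega
  · by_contra hc
    rw [nt_append, nt_inl] at hc
    have hij : i ≠ j := by
      rintro rfl
      exact hb r.1 (by simp) ⟨r, hr, rfl⟩
    have : ∃ B, Sum.inl B ∈ u ++ v := by
      obtain ⟨a, B, b, h⟩ := nt_pos (u ++ v) (by rw [nt_append]; omega)
      exact ⟨B, by rw [h]; simp⟩
    obtain ⟨B, hB⟩ := this
    refine dead G B ?_ _ w hz (by simp at hB ⊢; tauto)
    intro k
    have : k = i ∨ k = j := by
      have := i.2; have := j.2; have := k.2
      have : i.1 ≠ j.1 := fun h => hij (Fin.ext h)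
      rcases (by omega : k.1 = i.1 ∨ k.1 = j.1) with h | h
      · exact Or.inl (Fin.ext h)
      · exact Or.inr (Fin.ext h)
    rcases this with rfl | rfl
    · exact hb B (by simp at hB ⊢; tauto)
    · exact hbz B (by simp at hB ⊢; tauto)

theorem cd_gen (G : CDGS ℕ) (hG : G.deg ≤ 2) (w : List ℕ) :
    ReflTransGen (M G) [Sum.inl G.start] (tm w) ↔ Gen (PL G) G.start w := by
  rw [← gen_iff]
  constructor
  · intro h
    generalize ([Sum.inl G.start] : SForm ℕ) = a at h ⊢
    induction h using ReflTransGen.head_induction_on with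
    | refl => exact .refl
    | head h h2 ih =>
      refine ReflTransGen.head ?_ ih
      obtain ⟨i, ⟨r, hr, u, v, rfl, rfl⟩, hb⟩ := h
      refine ⟨⟨r, (mem_PL _ _).2 ⟨i, hr, ?_⟩, u, v, rfl, rfl⟩, count_le G hG i _ w hb h2⟩
      intro B hB
      exact hb B (by simp [hB])
  · intro h
    have key : ∀ y, ReflTransGen (BStep (PL G)) [Sum.inl G.start] y →
        ReflTransGen (M G) [Sum.inl G.start] y ∧ ntCount y ≤ 1 := by
      intro y h
      induction h with
      | refl => exact ⟨.refl, le_refl 1⟩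
      | tail _ h ih =>
        refine ⟨ih.1.tail ?_, h.2⟩
        obtain ⟨⟨r, hr, u, v, rfl, rfl⟩, hc⟩ := h
        obtain ⟨i, hi, hb⟩ := (mem_PL _ _).1 hr
        refine ⟨i, ⟨r, hi, u, v, rfl, rfl⟩, ?_⟩
        have h2 := ih.2
        rw [nt_append, nt_inl] at h2
        obtain ⟨s, rfl⟩ := nt_zero u (by omega)
        obtain ⟨t, rfl⟩ := nt_zero v (by omega)
        intro B hB
        refine hb B ?_
        simpa [tm] using hB
    exact (key _ h).1

/-! λ-elimination -/

def Good (P : List (Rule ℕ)) (r : Rule ℕ) : Prop :=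
  r.2 ≠ [] ∧ (r ∈ P ∨ ∃ u B v, (r.1, tm u ++ Sum.inl B :: tm v) ∈ P ∧ Gen P B [] ∧
    r.2 = tm (u ++ v))

open Classical in
noncomputable def LF (P : List (Rule ℕ)) : List (Rule ℕ) :=
  (P ++ P.map (fun r => (r.1, r.2.filter Sum.isRight))).filter (fun r => Good P r)

theorem filter_tm (u : List ℕ) : (tm u).filter Sum.isRight = tm u := by
  simp [tm]

theorem mem_LF (P : List (Rule ℕ)) (r : Rule ℕ) : r ∈ LF P ↔ Good P r := by
  simp only [LF, List.mem_filter, decide_eq_true_eq, and_iff_right_iff_imp]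
  rintro ⟨_, h | ⟨u, B, v, h1, _, h3⟩⟩
  · exact List.mem_append_left _ h
  · refine List.mem_append_right _ (List.mem_map.2 ⟨_, h1, ?_⟩)
    refine Prod.ext rfl ?_
    rw [h3, tm_append]
    simp only [List.filter_append, filter_tm]
    simp [tm]

theorem gen_LF1 (P : List (Rule ℕ)) (A : ℕ) (w : List ℕ) (h : Gen P A w) (hw : w ≠ []) :
    Gen (LF P) A w := by
  induction h with
  | term A w h =>
    refine Gen.term _ _ ((mem_LF _ _).2 ⟨?_, Or.inl h⟩)
    simpa [tm] using hw
  | step A B u v w h hg ih =>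
    by_cases hw' : w = []
    · subst hw'
      refine Gen.term _ _ ((mem_LF _ _).2 ⟨?_, Or.inr ⟨u, B, v, h, hg, ?_⟩⟩)
      · simpa [tm] using hw
      · simp [tm]
    · refine Gen.step _ _ _ _ _ ((mem_LF _ _).2 ⟨?_, Or.inl h⟩) (ih hw')
      simp

theorem gen_LF2 (P : List (Rule ℕ)) (A : ℕ) (w : List ℕ) (h : Gen (LF P) A w) :
    Gen P A w := by
  induction h with
  | term A w h =>
    obtain ⟨_, h | ⟨u, B, v, h1, h2, h3⟩⟩ := (mem_LF _ _).1 h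
    · exact Gen.term _ _ h
    · have := tm_inj h3
      subst this
      simpa using Gen.step _ _ _ _ _ h1 h2
  | step A B u v w h hg ih =>
    obtain ⟨_, h | ⟨u, B', v, h1, h2, h3⟩⟩ := (mem_LF _ _).1 h
    · exact Gen.step _ _ _ _ _ h ih
    · exfalso
      have := not_mem_tm B (u ++ v)
      rw [← h3] at this
      simp at this

/-! the CD system of a grammar -/

def enc (c : ℕ) : Symb ℕ → Symb ℕ := Sum.map (fun n => 2 * n + c) id

def mkCD (S : ℕ) (P : List (Rule ℕ)) : CDGS ℕ where
  deg := 2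
  start := 2 * S
  comp := fun c => P.map (fun r => (2 * r.1 + c.1, r.2.map (enc (1 - c.1))))

theorem enc_tm (c : ℕ) (w : List ℕ) : (tm w).map (enc c) = tm w := by
  simp [tm, enc]

theorem enc_tm_inv (c : ℕ) (z : SForm ℕ) (w : List ℕ) (h : z.map (enc c) = tm w) : z = tm w := by
  have : ntCount z = 0 := by
    by_contra h0
    obtain ⟨a, B, b, rfl⟩ := nt_pos z h0
    apply not_mem_tm (2 * B + c) w
    rw [← h]; simp [enc]
  obtain ⟨t, rfl⟩ := nt_zero z this
  rw [enc_tm] at h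
  exact h

theorem mem_mk (S : ℕ) (P : List (Rule ℕ)) (r : Rule ℕ) :
    r ∈ PL (mkCD S P) ↔ ∃ c ≤ 1, ∃ s ∈ P, r = (2 * s.1 + c, s.2.map (enc (1 - c))) := by
  rw [mem_PL]
  constructor
  · rintro ⟨i, hi, _⟩
    obtain ⟨s, hs, rfl⟩ := List.mem_map.1 hi
    have : i.1 < 2 := i.2
    exact ⟨i.1, by omega, s, hs, rfl⟩
  · rintro ⟨c, hc, s, hs, rfl⟩
    refine ⟨(⟨c, by omega⟩ : Fin 2), List.mem_map.2 ⟨s, hs, rfl⟩, ?_⟩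
    rintro B hB ⟨r, hr, h⟩
    obtain ⟨s', hs', rfl⟩ := List.mem_map.1 hr
    obtain ⟨b, hb, hb'⟩ := List.mem_map.1 hB
    rcases b with b | b
    · simp [enc] at hb' h
      omega
    · simp [enc] at hb'

theorem mk_gen1 (S : ℕ) (P : List (Rule ℕ)) (A : ℕ) (w : List ℕ) (h : Gen P A w) :
    ∀ c ≤ 1, Gen (PL (mkCD S P)) (2 * A + c) w := by
  induction h with
  | term A w h =>
    intro c hc
    exact Gen.term _ _ ((mem_mk _ _ _).2 ⟨c, hc, _, h, by rw [enc_tm]⟩)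
  | step A B u v w h hg ih =>
    intro c hc
    refine Gen.step _ (2 * B + (1 - c)) _ _ _ ((mem_mk _ _ _).2 ⟨c, hc, _, h, ?_⟩) (ih _ (by omega))
    rw [List.map_append, List.map_cons, enc_tm, enc_tm]
    rfl

theorem mk_gen2 (S : ℕ) (P : List (Rule ℕ)) (A' : ℕ) (w : List ℕ)
    (h : Gen (PL (mkCD S P)) A' w) :
    ∀ c ≤ 1, ∀ A, A' = 2 * A + c → Gen P A w := by
  induction h with
  | term A' w h =>
    rintro c hc A rfl
    obtain ⟨c', hc', ⟨s, z⟩, hs, he⟩ := (mem_mk _ _ _).1 h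
    simp only [Prod.mk.injEq] at he
    obtain ⟨h1, h2⟩ := he
    obtain rfl : s = A := by omega
    have := enc_tm_inv _ _ _ h2.symm
    subst this
    exact Gen.term _ _ hs
  | step A' B' u v w h hg ih =>
    rintro c hc A rfl
    obtain ⟨c', hc', ⟨s, z⟩, hs, he⟩ := (mem_mk _ _ _).1 h
    simp only [Prod.mk.injEq] at he
    obtain ⟨h1, h2⟩ := he
    obtain rfl : s = A := by omega
    obtain ⟨z1, z2, rfl, h3, h4⟩ := List.map_eq_append_iff.1 h2.symm
    obtain ⟨b, z3, rfl, h5, h6⟩ := List.map_eq_cons_iff.1 h4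
    have e1 := enc_tm_inv _ _ _ h3
    have e2 := enc_tm_inv _ _ _ h6
    subst e1 e2
    rcases b with b | b
    · simp [enc] at h5
      exact Gen.step _ _ _ _ _ hs (ih (1 - c') (by omega) b h5.symm)
    · simp [enc] at h5

theorem cd_fam (lf : Bool) (d : ℕ → Mode) (hd : d = Mode.le ∨ d = Mode.eq) :
    CDFam ℕ lf 2 (Mode.conj Mode.t (d 1)) = GenFam := by
  have lang : ∀ G : CDGS ℕ, G.deg ≤ 2 →
      G.lang (Mode.conj Mode.t (d 1)) = {w | Gen (PL G) G.start w} := by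
    intro G hG
    ext w
    rw [mode_iff G d hd, cd_gen G hG]
    rfl
  ext L
  constructor
  · rintro ⟨G, hG, _, h⟩
    rw [lang G hG] at h
    exact ⟨_, _, h⟩
  · rintro ⟨S, P, h⟩
    refine ⟨mkCD S (LF P), le_refl _, ?_, ?_⟩
    · rintro - i r hr
      obtain ⟨s, hs, rfl⟩ := List.mem_map.1 hr
      have := ((mem_LF _ _).1 hs).1
      simpa using this
    · rw [lang _ (le_refl _)]
      unfold EqL at h ⊢
      rw [← h]
      ext w
      simp only [Set.mem_sdiff, Set.mem_ofPred_eq, Set.mem_singleton_iff]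
      refine and_congr_left fun hw => ⟨fun h => ?_, fun h => ?_⟩
      · exact gen_LF2 _ _ _ (mk_gen2 _ _ _ _ h 0 (by omega) S rfl)
      · exact mk_gen1 S _ _ _ (gen_LF1 _ _ _ h hw) 0 (by omega)

/-- For every Δ ∈ {≤, =}, L(LIN) = L_1(CF) = L(CD_2, CF[−λ], (t∧Δ1)),
both with and without erasing rules. -/
theorem stmt1 (lf : Bool) (d : ℕ → Mode) (hd : d = Mode.le ∨ d = Mode.eq) :
    LinFam ℕ = CFFamInd ℕ 1 ∧
    CFFamInd ℕ 1 = CDFam ℕ lf 2 (Mode.conj Mode.t (d 1)) := by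
  rw [lin_fam, ind_fam, cd_fam lf d hd]
  exact ⟨rfl, rfl⟩

end CDHybrid
end
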